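/- Let R be an associative unital ℂ-algebra, let ε ∈ ℂ be nonzero and set ħ = ε², and let (ψ_k), (ψ*_k) be families indexed by half-integers satisfying the canonical anticommutation relations with parameter ħ. Let s : ℕ → ℂ be finitely supported, let S be a finite set of half-integers with 1/2, −1/2 ∈ S, and for k ∈ S define c_k = Σ_{n≥0} s_n ε^{n−2} k^{n+1}/(n+1)!. Then [Σ_{k∈S} c_k ψ_kψ*_k, ψ_{1/2}ψ*_{−1/2}] = (Σ_{m≥0} s_{2m} ħ^m / (2^{2m}(2m+1)!)) · ψ_{1/2}ψ*_{−1/2}. -/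

import Mathlib

/-!
The bilinear `ψ_k ψ*_k` acts by commutators as `ℏ` times a number operator: it multiplies `ψ_a` by
`ℏ δ_{k,a}` and `ψ*_b` by `-ℏ δ_{k,b}`. By the Leibniz rule `ψ_a ψ*_b` is an eigenvector of
`[Σ_k c_k ψ_k ψ*_k, ·]` with eigenvalue `ℏ (c_a - c_b)` (`commutator_sum_bilinear`). For `a = 1/2`,
`b = -1/2` the coefficient series combine into `ℏ (c_{1/2} - c_{-1/2})`, in which the terms with
`n` odd cancel and those with `n = 2m` give the stated series (`eigenvalue_eq`).
-/


/-- The half-integers `ℤ + 1/2`, realized as a subtype of `ℚ`. -/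
abbrev HalfInt := {q : ℚ // ∃ n : ℤ, (q : ℚ) = n + 1/2}

/-- The half-integer `1/2`. -/
def hhalf : HalfInt := ⟨1/2, 0, by norm_num⟩

/-- The half-integer `−1/2`. -/
def hneghalf : HalfInt := ⟨-1/2, -1, by norm_num⟩

section Fermions

variable {R : Type*} [Ring R] [Algebra ℂ R] {ℏ : ℂ} {ψ ψs : HalfInt → R}

lemma commutator_psi
    (hψψ : ∀ m n : HalfInt, ψ m * ψ n + ψ n * ψ m = 0)
    (hψψs : ∀ m n : HalfInt,
      ψ m * ψs n + ψs n * ψ m = (if m = n then ℏ else 0) • (1 : R)) (k a : HalfInt) :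
    ψ k * ψs k * ψ a - ψ a * (ψ k * ψs k) = (if a = k then ℏ else 0) • ψ k := by
  calc ψ k * ψs k * ψ a - ψ a * (ψ k * ψs k)
      = ψ k * (ψ a * ψs k + ψs k * ψ a) - (ψ k * ψ a + ψ a * ψ k) * ψs k := by noncomm_ring
    _ = _ := by rw [hψψs, hψψ, mul_smul_comm, mul_one, zero_mul, sub_zero]

lemma commutator_psi_star
    (hψsψs : ∀ m n : HalfInt, ψs m * ψs n + ψs n * ψs m = 0)
    (hψψs : ∀ m n : HalfInt,
      ψ m * ψs n + ψs n * ψ m = (if m = n then ℏ else 0) • (1 : R)) (k b : HalfInt) :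
    ψ k * ψs k * ψs b - ψs b * (ψ k * ψs k) = -((if k = b then ℏ else 0) • ψs k) := by
  calc ψ k * ψs k * ψs b - ψs b * (ψ k * ψs k)
      = ψ k * (ψs k * ψs b + ψs b * ψs k) - (ψ k * ψs b + ψs b * ψ k) * ψs k := by noncomm_ring
    _ = _ := by rw [hψψs, hψsψs, smul_mul_assoc, one_mul, mul_zero, zero_sub]

lemma commutator_bilinear
    (hψψ : ∀ m n : HalfInt, ψ m * ψ n + ψ n * ψ m = 0)
    (hψsψs : ∀ m n : HalfInt, ψs m * ψs n + ψs n * ψs m = 0)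
    (hψψs : ∀ m n : HalfInt,
      ψ m * ψs n + ψs n * ψ m = (if m = n then ℏ else 0) • (1 : R)) (k a b : HalfInt) :
    ψ k * ψs k * (ψ a * ψs b) - ψ a * ψs b * (ψ k * ψs k)
      = ((if a = k then ℏ else 0) - (if b = k then ℏ else 0)) • (ψ a * ψs b) := by
  have h1 : (if a = k then ℏ else 0) • ψ k = (if a = k then ℏ else 0) • ψ a := by
    split_ifs with h <;> simp [h]
  have h2 : (if k = b then ℏ else 0) • ψs k = (if b = k then ℏ else 0) • ψs b := by
    by_cases h : k = b
    · subst h; rfl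
    · simp [h, Ne.symm h]
  calc ψ k * ψs k * (ψ a * ψs b) - ψ a * ψs b * (ψ k * ψs k)
      = (ψ k * ψs k * ψ a - ψ a * (ψ k * ψs k)) * ψs b
        + ψ a * (ψ k * ψs k * ψs b - ψs b * (ψ k * ψs k)) := by noncomm_ring
    _ = _ := by
      rw [commutator_psi hψψ hψψs, commutator_psi_star hψsψs hψψs, h1, h2, smul_mul_assoc,
        mul_neg, mul_smul_comm, sub_smul, sub_eq_add_neg]

lemma commutator_sum_bilinear
    (hψψ : ∀ m n : HalfInt, ψ m * ψ n + ψ n * ψ m = 0)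
    (hψsψs : ∀ m n : HalfInt, ψs m * ψs n + ψs n * ψs m = 0)
    (hψψs : ∀ m n : HalfInt,
      ψ m * ψs n + ψs n * ψ m = (if m = n then ℏ else 0) • (1 : R))
    {S : Finset HalfInt} {a b : HalfInt} (ha : a ∈ S) (hb : b ∈ S) (c : HalfInt → ℂ) :
    (∑ k ∈ S, c k • (ψ k * ψs k)) * (ψ a * ψs b)
      - (ψ a * ψs b) * (∑ k ∈ S, c k • (ψ k * ψs k))
      = (ℏ * (c a - c b)) • (ψ a * ψs b) := by
  rw [Finset.sum_mul, Finset.mul_sum, ← Finset.sum_sub_distrib]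
  simp_rw [smul_mul_assoc, mul_smul_comm, ← smul_sub,
    commutator_bilinear hψψ hψsψs hψψs, smul_smul]
  rw [← Finset.sum_smul]
  simp only [mul_sub, Finset.sum_sub_distrib, mul_ite, mul_zero, Finset.sum_ite_eq, ha, hb,
    if_true]
  rw [mul_comm (c a), mul_comm (c b)]

end Fermions

/-- The scalar identity `ℏ (c_{1/2} - c_{-1/2}) = Σ_m s_{2m} ℏ^m / (2^{2m} (2m+1)!)`, obtained by
splitting the difference of the two coefficient series by the parity of `n`. -/
lemma eigenvalue_eq {ε : ℂ} (hε : ε ≠ 0) {s : ℕ → ℂ} (hs : (Function.support s).Finite) :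
    ε ^ 2 * ((∑' n : ℕ, s n * ε ^ ((n : ℤ) - 2) * (1 / 2 : ℂ) ^ (n + 1) / (Nat.factorial (n + 1)))
      - ∑' n : ℕ, s n * ε ^ ((n : ℤ) - 2) * (-1 / 2 : ℂ) ^ (n + 1) / (Nat.factorial (n + 1)))
    = ∑' m : ℕ, s (2 * m) * (ε ^ 2) ^ m / (2 ^ (2 * m) * (Nat.factorial (2 * m + 1))) := by
  have hsum (x : ℂ) : Summable fun n : ℕ =>
      s n * ε ^ ((n : ℤ) - 2) * x ^ (n + 1) / (Nat.factorial (n + 1)) := by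
    refine summable_of_hasFiniteSupport (hs.subset fun n hn h0 => hn ?_)
    simp [h0]
  rw [← (hsum _).tsum_sub (hsum _), ← tsum_mul_left]
  set g : ℕ → ℂ := fun n => ε ^ 2 * (s n * ε ^ ((n : ℤ) - 2) * (1 / 2 : ℂ) ^ (n + 1)
      / (Nat.factorial (n + 1))
    - s n * ε ^ ((n : ℤ) - 2) * (-1 / 2 : ℂ) ^ (n + 1) / (Nat.factorial (n + 1))) with hg
  have hgsum : Summable g := ((hsum _).sub (hsum _)).mul_left _
  have hinj2 : Function.Injective fun m : ℕ => 2 * m := fun _ _ h => by simpa using h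
  have hinj1 : Function.Injective fun m : ℕ => 2 * m + 1 := fun _ _ h => by simpa using h
  have hpow (n : ℕ) : ε ^ ((n : ℤ) - 2) = ε ^ n / ε ^ 2 := by
    rw [zpow_sub₀ hε]; norm_cast
  have hneg (n : ℕ) : (-1 / 2 : ℂ) ^ n = (-1) ^ n * (1 / 2) ^ n := by
    rw [← mul_pow]; norm_num
  have hodd (m : ℕ) : g (2 * m + 1) = 0 := by
    have h : (-1 : ℂ) ^ (2 * m + 1 + 1) = 1 := Even.neg_one_pow ⟨m + 1, by ring⟩
    simp only [hg]
    rw [hneg, h, one_mul, sub_self, mul_zero]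
  have heven (m : ℕ) :
      g (2 * m) = s (2 * m) * (ε ^ 2) ^ m / (2 ^ (2 * m) * (Nat.factorial (2 * m + 1))) := by
    have h : (-1 : ℂ) ^ (2 * m + 1) = -1 := Odd.neg_one_pow ⟨m, rfl⟩
    have hf : ((Nat.factorial (2 * m + 1) : ℕ) : ℂ) ≠ 0 :=
      Nat.cast_ne_zero.mpr (Nat.factorial_ne_zero _)
    simp only [hg]
    rw [hneg, h, hpow, one_div, inv_pow, pow_succ (2 : ℂ), ← pow_mul]
    field_simp
    ring
  calc ∑' n, g n = ∑' m, g (2 * m) + ∑' m, g (2 * m + 1) :=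
        (tsum_even_add_odd (hgsum.comp_injective hinj2) (hgsum.comp_injective hinj1)).symm
    _ = _ := by simp only [hodd, heven, tsum_zero, add_zero]

/-- With `ℏ = ε²` (`ε ≠ 0`), `s : ℕ → ℂ` finitely supported, and
`c_k = Σ_{n≥0} s_n ε^{n−2} k^{n+1}/(n+1)!` for `k ∈ S` (`1/2, −1/2 ∈ S`), one has
`[Σ_{k∈S} c_k ψ_k ψ*_k, ψ_{1/2} ψ*_{−1/2}]
  = (Σ_{m≥0} s_{2m} ℏ^m / (2^{2m}(2m+1)!)) ψ_{1/2} ψ*_{−1/2}`. -/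
theorem degree_one_descendant_commutator
    {R : Type*} [Ring R] [Algebra ℂ R] (ε ℏ : ℂ) (hε : ε ≠ 0) (hℏ : ℏ = ε ^ 2)
    (ψ ψs : HalfInt → R)
    (hψψ : ∀ m n : HalfInt, ψ m * ψ n + ψ n * ψ m = 0)
    (hψsψs : ∀ m n : HalfInt, ψs m * ψs n + ψs n * ψs m = 0)
    (hψψs : ∀ m n : HalfInt,
      ψ m * ψs n + ψs n * ψ m = (if m = n then ℏ else 0) • (1 : R))
    (s : ℕ → ℂ) (hs : (Function.support s).Finite)
    (S : Finset HalfInt) (hhalf_mem : hhalf ∈ S) (hneghalf_mem : hneghalf ∈ S)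
    (c : HalfInt → ℂ)
    (hc : ∀ k ∈ S, c k =
      ∑' n : ℕ, s n * ε ^ ((n : ℤ) - 2) * ((k.1 : ℂ)) ^ (n + 1)
        / (Nat.factorial (n + 1))) :
    (∑ k ∈ S, c k • (ψ k * ψs k)) * (ψ hhalf * ψs hneghalf)
      - (ψ hhalf * ψs hneghalf) * (∑ k ∈ S, c k • (ψ k * ψs k))
      = (∑' m : ℕ, s (2 * m) * ℏ ^ m
          / (2 ^ (2 * m) * (Nat.factorial (2 * m + 1)))) • (ψ hhalf * ψs hneghalf) := by
  rw [commutator_sum_bilinear hψψ hψsψs hψψs hhalf_mem hneghalf_mem c, hc _ hhalf_mem,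
    hc _ hneghalf_mem, hℏ, ← eigenvalue_eq hε hs]
  have h1 : ((hhalf.1 : ℚ) : ℂ) = 1 / 2 := by simp [hhalf]
  have h2 : ((hneghalf.1 : ℚ) : ℂ) = -1 / 2 := by simp [hneghalf]
  rw [h1, h2]
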